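/- arXiv:2512.10085 — 3 statements merged into one kernel-verified Lean document; each statement's English description precedes it below -/
import Mathlib

section
/- Let q ≥ 3 be an integer and d > 0 a real number. Then the polynomial a_p(z) = z^q − z^{q−1} − d has a complex root z1 whose principal argument β1 = arg(z1) satisfies π/(q−1) < β1 ≤ 2π/q, and whose modulus satisfies |z1| ≤ (d/sin(π/(q−1)))^{1/(q−1)}. -/
open Real

/-!
On the ray of angle `t`, the number `z ^ (n + 1) - z ^ n` is real where
`|z| = sin (n t) / sin ((n + 1) t)`, and there the law of sines in the triangle `0, 1, z` gives it
the value `|z| ^ n * sin t / -sin ((n + 1) t)`. As `t` increases from `π / n` to `2 π / (n + 1)`,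
this value goes from `0` to `∞`, so it equals `d` at some `t` in between. The bound on `|z| ^ n`
then amounts to `-sin ((n + 1) t) * sin (π / n) ≤ sin t`.
-/

theorem sin_neg_of_pi_lt_of_lt_two_pi {x : ℝ} (h₁ : π < x) (h₂ : x < 2 * π) : sin x < 0 := by
  rw [← neg_pos, ← sin_sub_pi]
  exact sin_pos_of_pos_of_lt_pi (by linarith) (by linarith)

theorem neg_sin_three_mul_le_sin {t : ℝ} (ht : 0 ≤ sin t) : -sin (3 * t) ≤ sin t := by
  have sum_eq : sin t + sin (3 * t) = 4 * sin t * cos t ^ 2 := by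
    rw [sin_three_mul, cos_sq']
    ring
  have : 0 ≤ 4 * sin t * cos t ^ 2 := by positivity
  linarith

/-- The modulus at which a point `z` of argument `t` makes `z ^ (n + 1) - z ^ n` real. It is the
junk value `0` when `sin ((n + 1) * t) = 0`. -/
noncomputable def rayRadius (n : ℕ) (t : ℝ) : ℝ := sin (n * t) / sin ((n + 1) * t)

/-- The point with polar coordinates `rayRadius n t` and `t`, at which `z ^ (n + 1) - z ^ n` is
real. -/
noncomputable def rayPoint (n : ℕ) (t : ℝ) : ℂ :=
  rayRadius n t * (Complex.cos t + Complex.sin t * Complex.I)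

/-- The real value of `z ^ (n + 1) - z ^ n` at `z = rayPoint n t`, with the same junk case as
`rayRadius`. -/
noncomputable def rayValue (n : ℕ) (t : ℝ) : ℝ :=
  rayRadius n t ^ n * sin t / -sin ((n + 1) * t)

/-- The open interval of angles in which the argument of the root of `z ^ (n + 1) - z ^ n - d` is
sought. It is empty for `n = 1`, and its left end is the junk value `0` for `n = 0`. -/
def rootSector (n : ℕ) : Set ℝ := Set.Ioo (π / n) (2 * π / (n + 1))

theorem norm_rayPoint (n : ℕ) (t : ℝ) : ‖rayPoint n t‖ = |rayRadius n t| := by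
  rw [rayPoint, norm_mul, Complex.norm_cos_add_sin_mul_I, Complex.norm_real, mul_one, norm_eq_abs]

section Ray

variable {n : ℕ} {t : ℝ}

theorem arg_rayPoint (hr : 0 < rayRadius n t) (ht : t ∈ Set.Ioc (-π) π) :
    (rayPoint n t).arg = t :=
  Complex.arg_mul_cos_add_sin_mul_I hr ht

theorem rayPoint_pow_succ_sub_pow (h : sin ((n + 1) * t) ≠ 0) :
    rayPoint n t ^ (n + 1) - rayPoint n t ^ n = rayValue n t := by
  have im_eq : rayRadius n t * sin ((n + 1) * t) - sin (n * t) = 0 := by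
    rw [rayRadius, div_mul_cancel₀ _ h, sub_self]
  have re_eq : rayRadius n t * cos ((n + 1) * t) - cos (n * t) = sin t / -sin ((n + 1) * t) := by
    have sin_sub_eq :
        sin ((n + 1) * t) * cos (n * t) - cos ((n + 1) * t) * sin (n * t) = sin t := by
      rw [← sin_sub, ← sub_mul, add_sub_cancel_left, one_mul]
    rw [rayRadius, eq_div_iff (neg_ne_zero.2 h), sub_mul, mul_neg, mul_right_comm,
      div_mul_cancel₀ _ h]
    linear_combination sin_sub_eq
  have im_eq_complex := congrArg ((↑) : ℝ → ℂ) im_eq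
  have re_eq_complex := congrArg ((↑) : ℝ → ℂ) re_eq
  rw [rayPoint, rayValue, mul_pow, mul_pow, Complex.cos_add_sin_mul_I_pow,
    Complex.cos_add_sin_mul_I_pow, mul_div_assoc]
  push_cast at im_eq_complex re_eq_complex ⊢
  linear_combination (rayRadius n t : ℂ) ^ n * (re_eq_complex + Complex.I * im_eq_complex)

theorem rayValue_eq_iff {d : ℝ} (h : sin ((n + 1) * t) ≠ 0) :
    rayValue n t = d ↔ (-sin (n * t)) ^ n * sin t = d * (-sin ((n + 1) * t)) ^ (n + 1) := by
  rw [rayValue, rayRadius, ← neg_div_neg_eq (sin (n * t)), div_pow, div_mul_eq_mul_div, div_div,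
    ← pow_succ, div_eq_iff (pow_ne_zero _ (neg_ne_zero.2 h))]

end Ray

section Sector

variable {n : ℕ} {t : ℝ}

theorem pos_of_mem_rootSector (ht : t ∈ rootSector n) : 0 < t :=
  lt_of_le_of_lt (by positivity) ht.1

theorem lt_pi_of_mem_rootSector (hn : 0 < n) (ht : t ∈ rootSector n) : t < π := by
  calc t < 2 * π / (n + 1) := ht.2
    _ ≤ 2 * π / (1 + 1) := by gcongr; exact_mod_cast hn
    _ = π := by ring

theorem sin_pos_of_mem_rootSector (hn : 0 < n) (ht : t ∈ rootSector n) : 0 < sin t :=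
  sin_pos_of_pos_of_lt_pi (pos_of_mem_rootSector ht) (lt_pi_of_mem_rootSector hn ht)

theorem sin_mul_neg_of_mem_rootSector (hn : 0 < n) (ht : t ∈ rootSector n) {c : ℝ}
    (hnc : n ≤ c) (hcn : c ≤ n + 1) : sin (c * t) < 0 := by
  have t_pos := pos_of_mem_rootSector ht
  apply sin_neg_of_pi_lt_of_lt_two_pi
  · calc π < t * n := (div_lt_iff₀ (by exact_mod_cast hn)).1 ht.1
      _ ≤ c * t := by rw [mul_comm]; gcongr
  · calc c * t ≤ t * (n + 1) := by rw [mul_comm]; gcongr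
      _ < 2 * π := (lt_div_iff₀ (by positivity)).1 ht.2

theorem sin_natCast_mul_neg_of_mem_rootSector (hn : 0 < n) (ht : t ∈ rootSector n) :
    sin (n * t) < 0 :=
  sin_mul_neg_of_mem_rootSector hn ht le_rfl (by linarith)

theorem sin_succ_mul_neg_of_mem_rootSector (hn : 0 < n) (ht : t ∈ rootSector n) :
    sin ((n + 1) * t) < 0 :=
  sin_mul_neg_of_mem_rootSector hn ht (by linarith) le_rfl

theorem rayRadius_pos (hn : 0 < n) (ht : t ∈ rootSector n) : 0 < rayRadius n t :=
  div_pos_of_neg_of_neg (sin_natCast_mul_neg_of_mem_rootSector hn ht)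
    (sin_succ_mul_neg_of_mem_rootSector hn ht)

theorem pi_div_lt_two_pi_div_succ (hn : 2 ≤ n) : π / n < 2 * π / (n + 1) := by
  have hn' : (2 : ℝ) ≤ n := by exact_mod_cast hn
  rw [div_lt_div_iff₀ (by positivity) (by positivity)]
  nlinarith [pi_pos]

theorem sin_pi_div_pos (hn : 2 ≤ n) : 0 < sin (π / n) :=
  sin_pos_of_pos_of_lt_pi (by positivity) (div_lt_self pi_pos (by exact_mod_cast hn))

theorem sin_two_pi_div_succ_pos (hn : 2 ≤ n) : 0 < sin (2 * π / (n + 1)) := by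
  refine sin_pos_of_pos_of_lt_pi (by positivity) ?_
  calc 2 * π / (n + 1) ≤ 2 * π / (2 + 1) := by gcongr; exact_mod_cast hn
    _ < π := by linarith [pi_pos]

theorem exists_mem_rootSector_rayValue_eq (hn : 2 ≤ n) {d : ℝ} (hd : 0 < d) :
    ∃ t ∈ rootSector n, rayValue n t = d := by
  -- Clearing denominators removes the pole of `rayValue n` at `2 * π / (n + 1)`.
  let F : ℝ → ℝ := fun t => (-sin (n * t)) ^ n * sin t - d * (-sin ((n + 1) * t)) ^ (n + 1)
  have F_left : F (π / n) < 0 := by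
    have n_mul : n * (π / n) = π := by field_simp
    have succ_mul : (n + 1) * (π / n) = π / n + π := by rw [add_mul, n_mul, one_mul, add_comm]
    have := mul_pos hd (pow_pos (sin_pi_div_pos hn) (n + 1))
    simp only [F, n_mul, succ_mul, sin_pi, sin_add_pi, neg_zero, neg_neg]
    rw [zero_pow (by lia)]
    linarith
  have F_right : 0 < F (2 * π / (n + 1)) := by
    have succ_mul : (n + 1) * (2 * π / (n + 1)) = 2 * π := by field_simp
    have n_mul : n * (2 * π / (n + 1)) = 2 * π - 2 * π / (n + 1) := by linarith
    have sin_pos := sin_two_pi_div_succ_pos hn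
    have := mul_pos (pow_pos sin_pos n) sin_pos
    simp only [F, n_mul, succ_mul, sin_two_pi, sin_two_pi_sub, neg_zero, neg_neg]
    rw [zero_pow (by lia)]
    linarith
  have F_continuous : Continuous F := by fun_prop
  obtain ⟨t, ht, hFt⟩ := intermediate_value_Ioo (pi_div_lt_two_pi_div_succ hn).le
    F_continuous.continuousOn ⟨F_left, F_right⟩
  have sin_ne := (sin_succ_mul_neg_of_mem_rootSector (by lia) ht).ne
  exact ⟨t, ht, (rayValue_eq_iff sin_ne).2 (sub_eq_zero.1 hFt)⟩

theorem le_pi_div_two_of_mem_rootSector (hn : 3 ≤ n) (ht : t ∈ rootSector n) : t ≤ π / 2 := by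
  calc t ≤ 2 * π / (n + 1) := ht.2.le
    _ ≤ 2 * π / (3 + 1) := by gcongr; exact_mod_cast hn
    _ = π / 2 := by ring

theorem neg_sin_succ_mul_mul_sin_pi_div_le (hn : 2 ≤ n) (ht : t ∈ rootSector n) :
    -sin ((n + 1) * t) * sin (π / n) ≤ sin t := by
  obtain rfl | three_le := hn.eq_or_lt
  · rw [Nat.cast_ofNat, two_add_one_eq_three, sin_pi_div_two, mul_one]
    exact neg_sin_three_mul_le_sin (sin_pos_of_mem_rootSector two_pos ht).le
  · have pi_div_pos : 0 < π / n := by positivity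
    calc -sin ((n + 1) * t) * sin (π / n) ≤ 1 * sin (π / n) :=
          mul_le_mul_of_nonneg_right (neg_le.1 (neg_one_le_sin _)) (sin_pi_div_pos hn).le
      _ = sin (π / n) := one_mul _
      _ ≤ sin t := sin_le_sin_of_le_of_le_pi_div_two (by linarith [pi_pos])
          (le_pi_div_two_of_mem_rootSector three_le ht) ht.1.le

theorem rayRadius_pow_le (hn : 2 ≤ n) (ht : t ∈ rootSector n) :
    rayRadius n t ^ n ≤ rayValue n t / sin (π / n) := by
  have sin_succ_pos : 0 < -sin ((n + 1) * t) :=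
    neg_pos.2 (sin_succ_mul_neg_of_mem_rootSector (by lia) ht)
  have radius_nonneg := (rayRadius_pos (by lia) ht).le
  rw [rayValue, div_div, le_div_iff₀ (mul_pos sin_succ_pos (sin_pi_div_pos hn))]
  exact mul_le_mul_of_nonneg_left (neg_sin_succ_mul_mul_sin_pi_div_le hn ht) (by positivity)

end Sector

theorem sharproots (q : ℕ) (hq : 3 ≤ q) (d : ℝ) (hd : 0 < d) :
    ∃ z1 : ℂ, z1 ^ q - z1 ^ (q - 1) - (d : ℂ) = 0 ∧
      π / (q - 1 : ℝ) < Complex.arg z1 ∧ Complex.arg z1 ≤ 2 * π / q ∧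
      ‖z1‖ ≤ (d / Real.sin (π / (q - 1 : ℝ))) ^ ((1 : ℝ) / (q - 1 : ℝ)) := by
  obtain ⟨n, rfl⟩ : ∃ n, q = n + 1 := ⟨q - 1, by lia⟩
  have n_pos : 0 < n := by lia
  have two_le : 2 ≤ n := by lia
  simp only [Nat.add_sub_cancel, Nat.cast_add, Nat.cast_one, add_sub_cancel_right]
  obtain ⟨t, ht, value_eq⟩ := exists_mem_rootSector_rayValue_eq two_le hd
  have radius_pos := rayRadius_pos n_pos ht
  have arg_eq : (rayPoint n t).arg = t := arg_rayPoint radius_pos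
    ⟨by linarith [pi_pos, pos_of_mem_rootSector ht], (lt_pi_of_mem_rootSector n_pos ht).le⟩
  refine ⟨rayPoint n t, ?_, arg_eq.symm ▸ ht.1, arg_eq.symm ▸ ht.2.le, ?_⟩
  · rw [rayPoint_pow_succ_sub_pow (sin_succ_mul_neg_of_mem_rootSector n_pos ht).ne, value_eq,
      sub_self]
  · have bound_nonneg := div_nonneg hd.le (sin_pi_div_pos two_le).le
    rw [norm_rayPoint, abs_of_pos radius_pos, one_div,
      le_rpow_inv_iff_of_pos radius_pos.le bound_nonneg (by positivity), rpow_natCast, ← value_eq]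
    exact rayRadius_pow_le two_le ht
end

section
/- Let q ≥ 3 be an integer and d > 0 a real number. Then every complex root z of the polynomial a_p(z) = z^q − z^{q−1} − d with 0 < arg(z) ≤ π satisfies |z| ≤ (d/sin(π/(q−1)))^{1/(q−1)}. -/
open Real

/-!
With `n = q - 1`, a root satisfies `z ^ n * (z - 1) = d`. Two factors with a nonnegative real
product cannot lie strictly on the same side of the real axis. But `z - 1` has the same imaginary
part as `z`, and if `0 < n * |arg z| < π` then `z ^ n` lies strictly on the same side as `z`; hence
`π / n ≤ |arg z|`. The ray from `0` through `z` thus makes an angle at least `π / n` with the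
positive real axis, so that its distance to the point `1` is at least `sin (π / n)`, and
`‖z‖ ^ n * sin (π / n) ≤ ‖z‖ ^ n * ‖z - 1‖ = d`.
-/

open InnerProductGeometry

theorem norm_mul_sin_le_norm_sub_of_le_angle {V : Type*} [NormedAddCommGroup V]
    [InnerProductSpace ℝ V] {x y : V} {θ : ℝ} (hθ₀ : 0 ≤ θ) (hθ : θ ≤ angle x y) :
    ‖y‖ * sin θ ≤ ‖x - y‖ := by
  have hcos : cos (angle x y) ≤ cos θ :=
    cos_le_cos_of_nonneg_of_le_pi hθ₀ (angle_le_pi x y) hθ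
  refine le_of_sq_le_sq ?_ (norm_nonneg _)
  calc (‖y‖ * sin θ) ^ 2
      ≤ (‖y‖ * sin θ) ^ 2 + (‖x‖ - ‖y‖ * cos θ) ^ 2 := le_add_of_nonneg_right (sq_nonneg _)
    _ = ‖x‖ ^ 2 + ‖y‖ ^ 2 - 2 * ‖x‖ * ‖y‖ * cos θ := by
      linear_combination ‖y‖ ^ 2 * sin_sq_add_cos_sq θ
    _ ≤ ‖x‖ ^ 2 + ‖y‖ ^ 2 - 2 * ‖x‖ * ‖y‖ * cos (angle x y) := by gcongr
    _ = ‖x - y‖ ^ 2 := by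
      linear_combination
        -norm_sub_sq_eq_norm_sq_add_norm_sq_sub_two_mul_norm_mul_norm_mul_cos_angle x y

theorem im_pow_eq_norm_pow_mul_sin (z : ℂ) (n : ℕ) :
    (z ^ n).im = ‖z‖ ^ n * sin (n * z.arg) := by
  have hpolar : z ^ n = (‖z‖ ^ n : ℝ) * Complex.exp ((n * z.arg : ℝ) * Complex.I) := by
    conv_lhs => rw [← Complex.norm_mul_exp_arg_mul_I z, mul_pow, ← Complex.exp_nat_mul]
    push_cast
    ring_nf
  rw [hpolar, Complex.im_ofReal_mul, Complex.exp_ofReal_mul_I_im]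

theorem im_pow_mul_im_pos {z : ℂ} {n : ℕ} (hn : n ≠ 0) (harg : z.arg ≠ 0)
    (hlt : n * |z.arg| < π) : 0 < (z ^ n).im * z.im := by
  have hz : 0 < ‖z‖ := norm_pos_iff.mpr (by rintro rfl; exact harg Complex.arg_zero)
  have harg' : 0 < |z.arg| := abs_pos.mpr harg
  have hle : |z.arg| ≤ n * |z.arg| :=
    le_mul_of_one_le_left harg'.le (Nat.one_le_cast.mpr (Nat.one_le_iff_ne_zero.mpr hn))
  have hsin : 0 < sin |z.arg| := sin_pos_of_pos_of_lt_pi harg' (hle.trans_lt hlt)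
  have hsin_mul : 0 < sin (n * |z.arg|) :=
    sin_pos_of_pos_of_lt_pi (harg'.trans_le hle) hlt
  have habs : sin (n * z.arg) * sin z.arg = sin (n * |z.arg|) * sin |z.arg| := by
    rcases abs_choice z.arg with h | h <;> simp [h]
  calc 0 < ‖z‖ ^ n * ‖z‖ * (sin (n * |z.arg|) * sin |z.arg|) := by positivity
    _ = (z ^ n).im * z.im := by
      rw [im_pow_eq_norm_pow_mul_sin, ← Complex.norm_mul_sin_arg z, ← habs]
      ring

theorem im_mul_im_nonpos_of_mul_eq_ofReal {w u : ℂ} {d : ℝ} (hd : 0 ≤ d) (h : w * u = d) :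
    w.im * u.im ≤ 0 := by
  rcases eq_or_ne u 0 with rfl | hu
  · simp
  have hconj : w * Complex.normSq u = d * starRingEnd ℂ u := by
    rw [← Complex.mul_conj, ← mul_assoc, h]
  have him : w.im * Complex.normSq u = -(d * u.im) := by
    simpa using congrArg Complex.im hconj
  refine nonpos_of_mul_nonpos_left ?_ (Complex.normSq_pos.mpr hu)
  calc w.im * u.im * Complex.normSq u = -(d * u.im ^ 2) := by linear_combination u.im * him
    _ ≤ 0 := neg_nonpos.mpr (by positivity)

section TrinomialRoots

variable {z : ℂ} {n : ℕ} {a d : ℝ}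

theorem pi_div_le_abs_arg_of_pow_mul_sub_eq (hn : n ≠ 0) (hd : 0 ≤ d)
    (hz : z ^ n * (z - a) = d) (harg : z.arg ≠ 0) : π / n ≤ |z.arg| := by
  by_contra! hlt
  have hlt' : n * |z.arg| < π := (lt_div_iff₀' (by positivity)).mp hlt
  have hopp : (z ^ n).im * z.im ≤ 0 := by
    simpa using im_mul_im_nonpos_of_mul_eq_ofReal hd hz
  exact hopp.not_gt (im_pow_mul_im_pos hn harg hlt')

theorem norm_pow_mul_sin_le_of_pow_mul_sub_eq (hn : n ≠ 0) (ha : 0 < a) (hd : 0 ≤ d)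
    (hz : z ^ n * (z - a) = d) (harg : z.arg ≠ 0) : ‖z‖ ^ n * (a * sin (π / n)) ≤ d := by
  have hz₀ : z ≠ 0 := by rintro rfl; exact harg Complex.arg_zero
  have hangle : angle z a = |z.arg| := by
    rw [Complex.angle_eq_abs_arg hz₀ (by exact_mod_cast ha.ne'), div_eq_mul_inv,
      ← Complex.ofReal_inv, Complex.arg_mul_real (inv_pos.mpr ha)]
  have hle : π / n ≤ angle z a := hangle ▸ pi_div_le_abs_arg_of_pow_mul_sub_eq hn hd hz harg
  have hdist : a * sin (π / n) ≤ ‖z - a‖ :=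
    calc a * sin (π / n) = ‖(a : ℂ)‖ * sin (π / n) := by rw [Complex.norm_of_nonneg ha.le]
      _ ≤ ‖z - a‖ := norm_mul_sin_le_norm_sub_of_le_angle (by positivity) hle
  calc ‖z‖ ^ n * (a * sin (π / n)) ≤ ‖z‖ ^ n * ‖z - a‖ := by gcongr
    _ = d := by rw [← norm_pow, ← norm_mul, hz, Complex.norm_of_nonneg hd]

end TrinomialRoots

theorem secondary_roots_bound_general {q : ℕ} (hq : 3 ≤ q) {a d : ℝ} (ha : 0 < a) (hd : 0 ≤ d)
    {z : ℂ} (hz : z ^ q - a * z ^ (q - 1) - d = 0) (harg : z.arg ≠ 0) :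
    ‖z‖ ≤ (d / (a * sin (π / (q - 1 : ℝ)))) ^ ((1 : ℝ) / (q - 1 : ℝ)) := by
  obtain ⟨n, rfl⟩ : ∃ n, q = n + 1 := ⟨q - 1, by omega⟩
  simp only [Nat.cast_add_one, add_sub_cancel_right, Nat.add_sub_cancel] at hz ⊢
  have hn : (1 : ℝ) < n := by exact_mod_cast (by omega : 1 < n)
  have hsin : 0 < sin (π / n) :=
    sin_pos_of_pos_of_lt_pi (by positivity) (div_lt_self pi_pos hn)
  have hroot : z ^ n * (z - a) = d := by linear_combination hz
  rw [one_div, le_rpow_inv_iff_of_pos (norm_nonneg z) (by positivity) (by positivity),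
    rpow_natCast, le_div_iff₀ (by positivity)]
  exact norm_pow_mul_sin_le_of_pow_mul_sub_eq (by omega) ha hd hroot harg

theorem secondary_roots_bound (q : ℕ) (hq : 3 ≤ q) (d : ℝ) (hd : 0 < d)
    (z : ℂ) (hz : z ^ q - z ^ (q - 1) - (d : ℂ) = 0)
    (harg1 : 0 < Complex.arg z) (harg2 : Complex.arg z ≤ π) :
    ‖z‖ ≤ (d / Real.sin (π / (q - 1 : ℝ))) ^ ((1 : ℝ) / (q - 1 : ℝ)) := by
  simpa using secondary_roots_bound_general hq one_pos hd.le (by simpa using hz) harg1.ne'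
end

section
/- Let q ≥ 1 and let z_0, …, z_{q−1} be pairwise distinct complex numbers. Let V be the q×q Vandermonde matrix with entries V_{j,i} = z_i^j for 0 ≤ j, i ≤ q−1, which is invertible, and for a q×q complex matrix A = (a_{j,i}) define ‖A‖ := max_j Σ_i |a_{j,i}| (maximum absolute row sum). Then ‖V^{−1}‖ ≤ max_{0 ≤ j ≤ q−1} ∏_{i ≠ j} (1 + |z_i|)/|z_j − z_i|. -/
open Finset

/-!
The `j`-th row of the inverse consists of the coefficients of the Lagrange basis polynomial at the
`j`-th node, because multiplying a row of coefficients by the Vandermonde matrix evaluates the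
polynomial at the nodes. The row sum is therefore the `ℓ¹` norm of the coefficients of
`∏ i ≠ j, (X - z i) / (z j - z i)`. This norm is submultiplicative, and each factor contributes
exactly `(1 + ‖z i‖) / ‖z j - z i‖`.
-/

section CoeffL1Norm

open Polynomial

section SeminormedRing

variable {R : Type*} [SeminormedRing R]

/-- The `ℓ¹` norm of the coefficient sequence of a polynomial. It is a plain function rather than a
`Norm` instance, since `R[X]` carries no preferred norm. -/
def coeffL1Norm (p : R[X]) : ℝ :=
  p.sum fun _ a ↦ ‖a‖

theorem coeffL1Norm_nonneg (p : R[X]) : 0 ≤ coeffL1Norm p :=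
  sum_nonneg fun _ _ ↦ norm_nonneg _

theorem coeffL1Norm_zero : coeffL1Norm (0 : R[X]) = 0 :=
  sum_zero_index _

theorem coeffL1Norm_monomial (n : ℕ) (a : R) : coeffL1Norm (monomial n a) = ‖a‖ :=
  sum_monomial_index a _ norm_zero

theorem coeffL1Norm_one [NormOneClass R] : coeffL1Norm (1 : R[X]) = 1 := by
  rw [← monomial_zero_one, coeffL1Norm_monomial, norm_one]

theorem coeffL1Norm_eq_sum_of_support_subset {p : R[X]} {s : Finset ℕ} (hs : p.support ⊆ s) :
    coeffL1Norm p = ∑ n ∈ s, ‖p.coeff n‖ :=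
  sum_eq_of_subset _ (fun _ ↦ norm_zero) hs

theorem sum_norm_coeff_eq_coeffL1Norm {n : ℕ} {p : R[X]} (hp : p.degree < n) :
    ∑ i : Fin n, ‖p.coeff i‖ = coeffL1Norm p :=
  sum_fin _ (fun _ ↦ norm_zero) hp

theorem coeffL1Norm_add_le (p q : R[X]) :
    coeffL1Norm (p + q) ≤ coeffL1Norm p + coeffL1Norm q := by
  rw [coeffL1Norm_eq_sum_of_support_subset support_add,
    coeffL1Norm_eq_sum_of_support_subset (subset_union_left (s₂ := q.support)),
    coeffL1Norm_eq_sum_of_support_subset (subset_union_right (s₁ := p.support)),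
    ← sum_add_distrib]
  gcongr with n
  rw [coeff_add]
  exact norm_add_le _ _

theorem coeffL1Norm_sum_le {ι : Type*} (s : Finset ι) (p : ι → R[X]) :
    coeffL1Norm (∑ i ∈ s, p i) ≤ ∑ i ∈ s, coeffL1Norm (p i) :=
  le_sum_of_subadditive _ coeffL1Norm_zero.le coeffL1Norm_add_le s p

theorem coeffL1Norm_mul_le (p q : R[X]) :
    coeffL1Norm (p * q) ≤ coeffL1Norm p * coeffL1Norm q :=
  calc coeffL1Norm (p * q)
    _ = coeffL1Norm (∑ i ∈ p.support, ∑ j ∈ q.support,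
          monomial (i + j) (p.coeff i * q.coeff j)) := by
        rw [mul_eq_sum_sum]
        rfl
    _ ≤ ∑ i ∈ p.support, ∑ j ∈ q.support,
          coeffL1Norm (monomial (i + j) (p.coeff i * q.coeff j)) :=
        (coeffL1Norm_sum_le _ _).trans (sum_le_sum fun _ _ ↦ coeffL1Norm_sum_le _ _)
    _ ≤ ∑ i ∈ p.support, ∑ j ∈ q.support, ‖p.coeff i‖ * ‖q.coeff j‖ := by
        gcongr
        rw [coeffL1Norm_monomial]
        exact norm_mul_le _ _
    _ = coeffL1Norm p * coeffL1Norm q := (sum_mul_sum _ _ _ _).symm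

end SeminormedRing

theorem coeffL1Norm_prod_le {ι R : Type*} [SeminormedCommRing R] [NormOneClass R]
    (s : Finset ι) (p : ι → R[X]) :
    coeffL1Norm (∏ i ∈ s, p i) ≤ ∏ i ∈ s, coeffL1Norm (p i) :=
  le_prod_of_submultiplicative_of_nonneg coeffL1Norm coeffL1Norm_nonneg
    (coeffL1Norm_one (R := R)).le coeffL1Norm_mul_le s p

variable {K : Type*} [NormedField K]

theorem coeffL1Norm_basisDivisor (x y : K) :
    coeffL1Norm (Lagrange.basisDivisor x y) = (1 + ‖y‖) / ‖x - y‖ := by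
  have hdeg : (Lagrange.basisDivisor x y).degree < (2 : ℕ) := by
    rw [Lagrange.basisDivisor]
    compute_degree!
  have hcoeff_zero : ‖(Lagrange.basisDivisor x y).coeff 0‖ = ‖x - y‖⁻¹ * ‖y‖ := by
    simp [Lagrange.basisDivisor]
  have hcoeff_one : ‖(Lagrange.basisDivisor x y).coeff 1‖ = ‖x - y‖⁻¹ := by
    simp [Lagrange.basisDivisor]
  rw [← sum_norm_coeff_eq_coeffL1Norm hdeg, Fin.sum_univ_two, Fin.val_zero, Fin.val_one,
    hcoeff_zero, hcoeff_one]
  ring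

theorem coeffL1Norm_lagrangeBasis_le {ι : Type*} [DecidableEq ι] (s : Finset ι) (v : ι → K)
    (i : ι) :
    coeffL1Norm (Lagrange.basis s v i) ≤ ∏ j ∈ s.erase i, (1 + ‖v j‖) / ‖v i - v j‖ := by
  simpa only [Lagrange.basis, coeffL1Norm_basisDivisor] using
    coeffL1Norm_prod_le (s.erase i) fun j ↦ Lagrange.basisDivisor (v i) (v j)

end CoeffL1Norm

section Vandermonde

open Matrix

theorem degree_lagrangeBasis_univ_lt {K : Type*} [Field K] {q : ℕ} {z : Fin q → K}
    (hz : Function.Injective z) (j : Fin q) : (Lagrange.basis univ z j).degree < q := by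
  rw [Lagrange.degree_basis hz.injOn (mem_univ j), card_fin]
  exact_mod_cast Nat.sub_one_lt_of_lt j.pos

theorem inv_transpose_vandermonde {K : Type*} [Field K] {q : ℕ} {z : Fin q → K}
    (hz : Function.Injective z) :
    (vandermonde z)ᵀ⁻¹ = of fun j i : Fin q ↦ (Lagrange.basis univ z j).coeff i := by
  refine inv_eq_left_inv (Matrix.ext fun j k ↦ ?_)
  have heval : ∑ i : Fin q, (Lagrange.basis univ z j).coeff i * z k ^ (i : ℕ) =
      (Lagrange.basis univ z j).eval (z k) := by
    rw [Polynomial.eval_eq_sum]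
    exact Polynomial.sum_fin (fun i a ↦ a * z k ^ i) (fun _ ↦ zero_mul _)
      (degree_lagrangeBasis_univ_lt hz j)
  simp only [mul_apply, of_apply, transpose_apply, vandermonde_apply, heval]
  obtain rfl | hjk := eq_or_ne j k
  · rw [Lagrange.eval_basis_self hz.injOn (mem_univ j), one_apply_eq]
  · rw [Lagrange.eval_basis_of_ne hjk (mem_univ k), one_apply_ne hjk]

theorem vandermonde_inverse_norm_general {K : Type*} [NormedField K] {q : ℕ} {z : Fin q → K}
    (hz : Function.Injective z) :
    IsUnit (vandermonde z)ᵀ.det ∧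
      ∀ j, ∑ i, ‖(vandermonde z)ᵀ⁻¹ j i‖ ≤ ∏ i ∈ univ.erase j, (1 + ‖z i‖) / ‖z j - z i‖ := by
  refine ⟨?_, fun j ↦ ?_⟩
  · rw [det_transpose]
    exact (det_vandermonde_ne_zero_iff.mpr hz).isUnit
  · calc ∑ i, ‖(vandermonde z)ᵀ⁻¹ j i‖
      _ = coeffL1Norm (Lagrange.basis univ z j) := by
          simp only [inv_transpose_vandermonde hz, of_apply]
          exact sum_norm_coeff_eq_coeffL1Norm (degree_lagrangeBasis_univ_lt hz j)
      _ ≤ ∏ i ∈ univ.erase j, (1 + ‖z i‖) / ‖z j - z i‖ := coeffL1Norm_lagrangeBasis_le univ z j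

end Vandermonde

theorem vandermonde_inverse_norm (q : ℕ) (hq : 0 < q) (z : Fin q → ℂ)
    (hz : Function.Injective z) :
    IsUnit (Matrix.of (fun j i : Fin q => z i ^ (j : ℕ))).det ∧
    (Finset.univ.sup' (⟨⟨0, hq⟩, Finset.mem_univ _⟩ : (Finset.univ : Finset (Fin q)).Nonempty)
        (fun j : Fin q =>
          ∑ i : Fin q, ‖(Matrix.of (fun j i : Fin q => z i ^ (j : ℕ)))⁻¹ j i‖) ≤
      Finset.univ.sup' (⟨⟨0, hq⟩, Finset.mem_univ _⟩ : (Finset.univ : Finset (Fin q)).Nonempty)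
        (fun j : Fin q =>
          ∏ i ∈ Finset.univ.erase j,
            (1 + ‖z i‖) / ‖z j - z i‖)) :=
  ⟨(vandermonde_inverse_norm_general hz).1,
    sup'_mono_fun fun j _ ↦ (vandermonde_inverse_norm_general hz).2 j⟩
end
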